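/- arXiv:1311.1562 — 6 statements merged into one kernel-verified Lean document; each statement's English description precedes it below -/
import Mathlib

section
/- Let (S, Sigma, lambda) be a probability space, G a sub-sigma-algebra of Sigma, and D in Sigma with lambda(D) > 0. Suppose D is a G-atom in the sense of Dynkin and Evstigneev: for every Sigma-measurable D_0 contained in D, lambda({ s in S : 0 < E(1_{D_0} | G)(s) < E(1_D | G)(s) }) = 0. Then D is a G-atom in the following sense: for every Sigma-measurable D_0 contained in D there exists D_1 in G with lambda(D_0 symmetric-difference (D_1 intersect D)) = 0. -/
open MeasureTheory

/-! A nonnegative integrable function vanishes almost everywhere on the `G`-measurable set where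
its conditional expectation vanishes; applied to `g - f`, this says that ordered functions agree
almost everywhere wherever their conditional expectations do. Let `D₁ = {0 < E(1_{D₀}|G)}`. Off
`D₁` the conditional expectation of `1_{D₀}` vanishes, hence so does `1_{D₀}`; on `D₁` the atom
condition forces `E(1_{D₀}|G) = E(1_D|G)`, hence `1_{D₀} = 1_D`. Thus `D₀ = D₁ ∩ D` up to a null
set. -/

section CondExp

variable {S : Type*} {G mS : MeasurableSpace S} {μ : Measure S} {f g : S → ℝ}

lemma ae_eq_zero_of_condExp_eq_zero (hG : G ≤ mS) [SigmaFinite (μ.trim hG)]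
    (hf : Integrable f μ) (hf_nonneg : 0 ≤ᵐ[μ] f) :
    ∀ᵐ s ∂μ, (μ[f|G]) s = 0 → f s = 0 := by
  have hZ : MeasurableSet[G] {s | (μ[f|G]) s = 0} :=
    stronglyMeasurable_condExp.measurable (measurableSet_singleton 0)
  have integral_eq_zero : ∫ s in {s | (μ[f|G]) s = 0}, f s ∂μ = 0 := by
    rw [← setIntegral_condExp hG hf hZ]
    exact setIntegral_eq_zero_of_forall_eq_zero fun _ hs => hs
  exact (ae_restrict_iff' (hG _ hZ)).mp <|
    (setIntegral_eq_zero_iff_of_nonneg_ae (ae_restrict_of_ae hf_nonneg) hf.integrableOn).mp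
      integral_eq_zero

lemma ae_eq_of_condExp_eq_of_le (hG : G ≤ mS) [SigmaFinite (μ.trim hG)]
    (hf : Integrable f μ) (hg : Integrable g μ) (hfg : f ≤ᵐ[μ] g) :
    ∀ᵐ s ∂μ, (μ[f|G]) s = (μ[g|G]) s → f s = g s := by
  have hsub_nonneg : 0 ≤ᵐ[μ] g - f := hfg.mono fun _ hs => sub_nonneg.mpr hs
  filter_upwards [condExp_sub hg hf G, ae_eq_zero_of_condExp_eq_zero hG (hg.sub hf) hsub_nonneg]
    with s condExp_sub_eq eq_zero_of_condExp_eq_zero heq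
  refine (sub_eq_zero.mp (eq_zero_of_condExp_eq_zero ?_)).symm
  rw [condExp_sub_eq, Pi.sub_apply, heq, sub_self]

lemma ae_eq_indicator_setOf_condExp_pos (hG : G ≤ mS) [SigmaFinite (μ.trim hG)]
    (hf : Integrable f μ) (hg : Integrable g μ) (hf_nonneg : 0 ≤ᵐ[μ] f) (hfg : f ≤ᵐ[μ] g)
    (hgap : ∀ᵐ s ∂μ, ¬(0 < (μ[f|G]) s ∧ (μ[f|G]) s < (μ[g|G]) s)) :
    f =ᵐ[μ] {s | 0 < (μ[f|G]) s}.indicator g := by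
  filter_upwards [condExp_nonneg (m := G) hf_nonneg, condExp_mono (m := G) hf hg hfg,
    ae_eq_zero_of_condExp_eq_zero hG hf hf_nonneg, ae_eq_of_condExp_eq_of_le hG hf hg hfg, hgap]
    with s hnonneg hle eq_zero eq_of_condExp_eq hs
  by_cases hpos : s ∈ {s | 0 < (μ[f|G]) s}
  · rw [Set.indicator_of_mem hpos]
    exact eq_of_condExp_eq (hle.eq_of_not_lt fun hlt => hs ⟨hpos, hlt⟩)
  · rw [Set.indicator_of_notMem hpos]
    exact eq_zero (le_antisymm (not_lt.mp hpos) hnonneg)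

end CondExp

theorem gAtom_of_dynkinEvstigneev_gAtom_general
    {S : Type*} {G mS : MeasurableSpace S} {μ : Measure S}
    (hG : G ≤ mS) [SigmaFinite (μ.trim hG)] {D₀ D : Set S}
    (hD₀ : MeasurableSet[mS] D₀) (hD : MeasurableSet[mS] D) (hsub : D₀ ⊆ D) (hD_fin : μ D ≠ ⊤)
    (hDE : μ {s | 0 < (μ[D₀.indicator (fun _ => (1 : ℝ))|G]) s ∧
      (μ[D₀.indicator (fun _ => (1 : ℝ))|G]) s < (μ[D.indicator (fun _ => (1 : ℝ))|G]) s} = 0) :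
    ∃ D₁ : Set S, MeasurableSet[G] D₁ ∧ μ (symmDiff D₀ (D₁ ∩ D)) = 0 := by
  set f : S → ℝ := D₀.indicator fun _ => 1
  set g : S → ℝ := D.indicator fun _ => 1
  have hf : Integrable f μ :=
    (integrable_indicator_iff hD₀).mpr (integrableOn_const (measure_ne_top_of_subset hsub hD_fin))
  have hg : Integrable g μ := (integrable_indicator_iff hD).mpr (integrableOn_const hD_fin)
  have hf_nonneg : 0 ≤ f := Set.indicator_nonneg fun _ _ => zero_le_one
  have hfg : f ≤ g := Set.indicator_le_indicator_of_subset hsub fun _ => zero_le_one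
  have indicator_ae_eq : f =ᵐ[μ] {s | 0 < (μ[f|G]) s}.indicator g :=
    ae_eq_indicator_setOf_condExp_pos hG hf hg (.of_forall hf_nonneg) (.of_forall hfg)
      (measure_eq_zero_iff_ae_notMem.mp hDE)
  refine ⟨{s | 0 < (μ[f|G]) s}, stronglyMeasurable_condExp.measurable measurableSet_Ioi, ?_⟩
  rw [Set.indicator_indicator] at indicator_ae_eq
  exact measure_symmDiff_eq_zero_iff.mpr <|
    (Filter.indicator_const_eventuallyEq one_ne_zero).mp indicator_ae_eq

/-- A `G`-atom in the sense of Dynkin–Evstigneev is a `G`-atom in the sense of He–Sun: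
if for every measurable `D₀ ⊆ D` the set `{0 < E(1_{D₀}|G) < E(1_D|G)}` is null, then
every measurable `D₀ ⊆ D` agrees modulo null sets with `D₁ ∩ D` for some `G`-measurable
`D₁`. -/
theorem gAtom_of_dynkinEvstigneev_gAtom
    {S : Type*} [mS : MeasurableSpace S]
    (lam : Measure S) [IsProbabilityMeasure lam]
    (G : MeasurableSpace S) (hG : G ≤ mS)
    (D : Set S) (hD : MeasurableSet[mS] D) (hD_pos : 0 < lam D)
    (hDE : ∀ D₀ ⊆ D, MeasurableSet[mS] D₀ →
      lam {s | 0 < (lam[D₀.indicator (fun _ => (1 : ℝ))|G]) s ∧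
        (lam[D₀.indicator (fun _ => (1 : ℝ))|G]) s
          < (lam[D.indicator (fun _ => (1 : ℝ))|G]) s} = 0) :
    ∀ D₀ ⊆ D, MeasurableSet[mS] D₀ →
      ∃ D₁ : Set S, MeasurableSet[G] D₁ ∧ lam (symmDiff D₀ (D₁ ∩ D)) = 0 :=
  fun D₀ hsub hD₀ =>
    gAtom_of_dynkinEvstigneev_gAtom_general hG hD₀ hD hsub (measure_ne_top lam D) (hDE D₀ hsub hD₀)
end

section
/- Suppose (S, Sigma, lambda) is a probability space, G is a sub-sigma-algebra of Sigma, and Sigma has a G-atom D with lambda(D) > 0. Then there exists a Sigma-measurable correspondence G from S to subsets of {0,1} (namely G(s) = {0,1} for s in D and G(s) = {0} for s not in D) such that I^{(Sigma,G)}_G is not equal to I^{(Sigma,G)}_{co(G)}; in particular, the function f = (1/2) 1_D is a Sigma-measurable selection of co(G), but there is no Sigma-measurable selection g of G with E(g | G) = E(f | G) lambda-almost everywhere. -/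
open MeasureTheory

/-- `D` is a `G`-atom for the measure `lam`. -/
def IsGAtom {S : Type*} (mS : MeasurableSpace S) (G : MeasurableSpace S)
    (lam : @Measure S mS) (D : Set S) : Prop :=
  0 < lam D ∧ ∀ D₀ ⊆ D, MeasurableSet[mS] D₀ →
    ∃ D₁ : Set S, MeasurableSet[G] D₁ ∧ lam (symmDiff D₀ (D₁ ∩ D)) = 0

/-!
Up to a null set, every measurable subset `D₀` of a `G`-atom `D` is `D₁ ∩ D` for some `D₁ ∈ G`, so
`E(1_{D₀} | G) = 1_{D₁} p`, where `p = E(1_D | G)`. If this were `c p` with `0 < c < 1`, then `p`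
would vanish both on and off `D₁`, against `∫ p = λ(D) > 0`. But the measurable selections of `F`
are exactly the indicators of measurable subsets of `D`.
-/

section Correspondence

variable {S : Type*} {D : Set S} [DecidablePred (· ∈ D)]

lemma measurableSet_setOf_ite_inter_nonempty [MeasurableSpace S] {X : Type*}
    (hD : MeasurableSet D) (A B U : Set X) :
    MeasurableSet {s | ((if s ∈ D then A else B) ∩ U).Nonempty} := by
  let : MeasurableSpace (Set X) := ⊤
  have h_ite : Measurable fun s => if s ∈ D then A else B :=
    measurable_const.ite hD measurable_const
  exact h_ite (t := {C | (C ∩ U).Nonempty}) trivial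

lemma smul_indicator_mem_convexHull_ite {E : Type*} [AddCommGroup E] [Module ℝ E] {c : ℝ}
    (hc : c ∈ Set.Icc 0 1) (y : E) (s : S) :
    c • D.indicator (fun _ => y) s ∈ convexHull ℝ (if s ∈ D then {0, y} else {0}) := by
  by_cases hs : s ∈ D
  · simp only [hs, Set.indicator_of_mem, if_true, convexHull_pair]
    exact ⟨1 - c, c, sub_nonneg.2 hc.2, hc.1, sub_add_cancel 1 c, by simp⟩
  · simp [hs]

lemma eq_indicator_inter_preimage_of_forall_mem_ite {M : Type*} [Zero M] {g : S → M} {y : M}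
    (hg : ∀ s, g s ∈ (if s ∈ D then {0, y} else {0} : Set M)) :
    g = (D ∩ g ⁻¹' {y}).indicator fun _ => y := by
  funext s
  have hgs := hg s
  by_cases hs : s ∈ D <;> by_cases hy : g s = y <;> simp_all

end Correspondence

lemma ae_eq_zero_of_indicator_ae_eq_smul {S R E : Type*} [MeasurableSpace S] {lam : Measure S}
    [Ring R] [IsDomain R] [AddCommGroup E] [Module R E] [Module.IsTorsionFree R E] {c : R}
    (hc₀ : c ≠ 0) (hc₁ : c ≠ 1) {A : Set S} {p : S → E}
    (h : A.indicator p =ᵐ[lam] c • p) : p =ᵐ[lam] 0 := by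
  filter_upwards [h] with s hs
  by_cases hsA : s ∈ A
  · have h_fixed : p s = c • p s := by simpa [hsA] using hs
    have h_smul : (1 - c) • p s = 0 := by rw [sub_smul, one_smul, ← h_fixed, sub_self]
    exact (smul_eq_zero.1 h_smul).resolve_left (sub_ne_zero.2 hc₁.symm)
  · have h_smul : 0 = c • p s := by simpa [hsA] using hs
    exact (smul_eq_zero.1 h_smul.symm).resolve_left hc₀

lemma not_condExp_indicator_one_ae_eq_zero {S : Type*} {G mS : MeasurableSpace S}
    {lam : Measure S} (hG : G ≤ mS) [SigmaFinite (lam.trim hG)] {D : Set S}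
    (hD : MeasurableSet D) (hD_pos : 0 < lam D) (hD_fin : lam D ≠ ⊤) :
    ¬ lam[D.indicator fun _ => (1 : ℝ) | G] =ᵐ[lam] 0 := by
  intro h_zero
  have h_real : lam.real D = 0 := calc
    lam.real D = ∫ s, D.indicator (fun _ => (1 : ℝ)) s ∂lam := by
      simp [integral_indicator hD]
    _ = ∫ s, (lam[D.indicator fun _ => (1 : ℝ) | G]) s ∂lam := (integral_condExp hG).symm
    _ = 0 := integral_eq_zero_of_ae h_zero
  exact hD_pos.ne' ((measureReal_eq_zero_iff hD_fin).1 h_real)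

namespace IsGAtom

variable {S : Type*} {G mS : MeasurableSpace S} {lam : Measure S} {D D₀ : Set S}
  {E : Type*} [NormedAddCommGroup E] [NormedSpace ℝ E] [CompleteSpace E] {f : S → E}

lemma exists_condExp_indicator_ae_eq (hD_atom : IsGAtom mS G lam D)
    (hf : Integrable (D.indicator f) lam) (hD₀D : D₀ ⊆ D) (hD₀ : MeasurableSet D₀) :
    ∃ D₁, MeasurableSet[G] D₁ ∧
      lam[D₀.indicator f | G] =ᵐ[lam] D₁.indicator (lam[D.indicator f | G]) := by
  obtain ⟨D₁, hD₁, h_null⟩ := hD_atom.2 D₀ hD₀D hD₀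
  refine ⟨D₁, hD₁, ?_⟩
  have h_ae : D₀.indicator f =ᵐ[lam] D₁.indicator (D.indicator f) := by
    rw [Set.indicator_indicator]
    exact indicator_ae_eq_of_ae_eq_set (measure_symmDiff_eq_zero_iff.1 h_null)
  exact (condExp_congr_ae h_ae).trans (condExp_indicator hf hD₁)

lemma condExp_indicator_ae_eq_zero_of_ae_eq_smul (hD_atom : IsGAtom mS G lam D)
    (hf : Integrable (D.indicator f) lam) (hD₀D : D₀ ⊆ D) (hD₀ : MeasurableSet D₀) {c : ℝ}
    (hc₀ : c ≠ 0) (hc₁ : c ≠ 1)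
    (h : lam[D₀.indicator f | G] =ᵐ[lam] c • lam[D.indicator f | G]) :
    lam[D.indicator f | G] =ᵐ[lam] 0 := by
  obtain ⟨D₁, -, hD₁⟩ := hD_atom.exists_condExp_indicator_ae_eq hf hD₀D hD₀
  exact ae_eq_zero_of_indicator_ae_eq_smul hc₀ hc₁ (hD₁.symm.trans h)

end IsGAtom

open Classical in
theorem exists_correspondence_condexp_selection_ne_of_gAtom_general
    {S : Type*} (G : MeasurableSpace S) {mS : MeasurableSpace S} (lam : Measure S)
    (hG : G ≤ mS) [SigmaFinite (lam.trim hG)]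
    (D : Set S) (hD : MeasurableSet[mS] D) (hD_fin : lam D ≠ ⊤)
    (hD_atom : IsGAtom mS G lam D) {c : ℝ} (hc : c ∈ Set.Ioo 0 1) :
    ∃ F : S → Set ℝ,
      F = (fun s => if s ∈ D then ({0, 1} : Set ℝ) else {0}) ∧
      (∀ U : Set ℝ, IsOpen U → MeasurableSet[mS] {s | (F s ∩ U).Nonempty}) ∧
      Measurable[mS] (fun s => c * D.indicator (fun _ => (1 : ℝ)) s) ∧
      (∀ s, c * D.indicator (fun _ => (1 : ℝ)) s ∈ convexHull ℝ (F s)) ∧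
      ¬ ∃ g : S → ℝ, Measurable[mS] g ∧ (∀ s, g s ∈ F s) ∧
        lam[g | G] =ᵐ[lam] lam[fun s => c * D.indicator (fun _ => (1 : ℝ)) s | G] := by
  refine ⟨_, rfl, fun U _ => measurableSet_setOf_ite_inter_nonempty hD {0, 1} {0} U,
    (measurable_const.indicator hD).const_mul c,
    smul_indicator_mem_convexHull_ite (Set.Ioo_subset_Icc_self hc) 1, ?_⟩
  rintro ⟨g, hg, hg_mem, hg_condExp⟩
  rw [eq_indicator_inter_preimage_of_forall_mem_ite hg_mem] at hg_condExp
  have hg_smul := hg_condExp.trans (condExp_smul c (D.indicator fun _ => (1 : ℝ)) G)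
  have hD_int : Integrable (D.indicator fun _ => (1 : ℝ)) lam :=
    (integrable_indicator_iff hD).2 (integrableOn_const hD_fin)
  exact not_condExp_indicator_one_ae_eq_zero hG hD hD_atom.1 hD_fin
    (hD_atom.condExp_indicator_ae_eq_zero_of_ae_eq_smul hD_int Set.inter_subset_left
      (hD.inter (hg (measurableSet_singleton 1))) hc.1.ne' hc.2.ne hg_smul)

open Classical in
/-- If `Σ` has a `G`-atom `D`, then for the measurable correspondence
`F(s) = {0,1}` on `D` and `F(s) = {0}` off `D`, the function `f = (1/2)·1_D` is a
measurable selection of `co F`, but no measurable selection `g` of `F` satisfies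
`E(g|G) = E(f|G)` a.e.; in particular `I_F ≠ I_{co F}`. -/
theorem exists_correspondence_condexp_selection_ne_of_gAtom
    {S : Type*} [mS : MeasurableSpace S]
    (lam : Measure S) [IsProbabilityMeasure lam]
    (G : MeasurableSpace S) (hG : G ≤ mS)
    (D : Set S) (hD : MeasurableSet[mS] D)
    (hD_atom : IsGAtom mS G lam D) :
    ∃ F : S → Set ℝ,
      F = (fun s => if s ∈ D then ({0, 1} : Set ℝ) else {0}) ∧
      -- `F` is a measurable correspondence
      (∀ U : Set ℝ, IsOpen U → MeasurableSet[mS] {s | (F s ∩ U).Nonempty}) ∧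
      -- `f = (1/2)·1_D` is a measurable selection of `co F`
      Measurable[mS] (fun s => (1 / 2 : ℝ) * D.indicator (fun _ => (1 : ℝ)) s) ∧
      (∀ s, (1 / 2 : ℝ) * D.indicator (fun _ => (1 : ℝ)) s ∈ convexHull ℝ (F s)) ∧
      -- but no measurable selection of `F` has the same conditional expectation as `f`
      ¬ ∃ g : S → ℝ, Measurable[mS] g ∧ (∀ s, g s ∈ F s) ∧
        lam[g|G] =ᵐ[lam] lam[fun s => (1 / 2 : ℝ) * D.indicator (fun _ => (1 : ℝ)) s|G] := by
  exact exists_correspondence_condexp_selection_ne_of_gAtom_general G lam hG D hD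
    (measure_ne_top lam D) hD_atom (by norm_num)
end

section
/- Let (S, Sigma, lambda) be a probability space, G a sub-sigma-algebra of Sigma, and D in Sigma a G-atom. Then there is no Sigma-measurable set D_2 contained in D such that E(1_{D_2} | G) = (1/2) E(1_D | G) lambda-almost everywhere. Equivalently, if D_2 is a measurable subset of D with E(1_{D_2} | G) = (1/2) E(1_D | G) almost everywhere, then lambda(E intersect D_2) = (1/2) lambda(E) for every measurable E contained in D, which forces the contradiction lambda(D_2) = (1/2) lambda(D) > 0 and lambda(D_2) = (1/2) lambda(D_2). -/
open MeasureTheory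

/-!
If `D₀ ⊆ D` agrees up to a null set with `D₁ ∩ D`, where `D₁ ∈ G`, then pulling the `G`-measurable
factor `1_{D₁}` out of the conditional expectation gives `E(1_{D₀}|G) = 1_{D₁} · E(1_D|G)`. Thus,
wherever `E(1_D|G)` does not vanish, the ratio of `E(1_{D₀}|G)` to it is `0` or `1`. A ratio of
`1/2` would therefore force `E(1_D|G) = 0` almost everywhere, hence `D` to be null.
-/

section

variable {S E : Type*} {G mS : MeasurableSpace S} {lam : Measure S} {D D₀ : Set S}
  [NormedAddCommGroup E] [NormedSpace ℝ E] [CompleteSpace E]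

theorem IsGAtom.exists_condExp_indicator_ae_eq_s7 {f : S → E} (hD_atom : IsGAtom mS G lam D)
    (hD : MeasurableSet D) (hf : IntegrableOn f D lam) (hD₀ : MeasurableSet D₀) (hsub : D₀ ⊆ D) :
    ∃ D₁, MeasurableSet[G] D₁ ∧
      lam[D₀.indicator f | G] =ᵐ[lam] D₁.indicator (lam[D.indicator f | G]) := by
  obtain ⟨D₁, hD₁, hnull⟩ := hD_atom.2 D₀ hsub hD₀
  have hD₀_eq : D₀.indicator f =ᵐ[lam] D₁.indicator (D.indicator f) := by
    rw [Set.indicator_indicator]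
    exact indicator_ae_eq_of_ae_eq_set (measure_symmDiff_eq_zero_iff.mp hnull)
  refine ⟨D₁, hD₁, ?_⟩
  calc
    lam[D₀.indicator f | G] =ᵐ[lam] lam[D₁.indicator (D.indicator f) | G] :=
      condExp_congr_ae hD₀_eq
    _ =ᵐ[lam] D₁.indicator (lam[D.indicator f | G]) :=
      condExp_indicator (hf.integrable_indicator hD) hD₁

theorem IsGAtom.condExp_indicator_ae_eq_zero_of_ae_eq_smul_s7 {f : S → E} {c : S → ℝ}
    (hD_atom : IsGAtom mS G lam D) (hD : MeasurableSet D) (hf : IntegrableOn f D lam)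
    (hD₀ : MeasurableSet D₀) (hsub : D₀ ⊆ D) (hc : ∀ᵐ s ∂lam, c s ≠ 0 ∧ c s ≠ 1)
    (hratio : lam[D₀.indicator f | G] =ᵐ[lam] fun s => c s • (lam[D.indicator f | G]) s) :
    lam[D.indicator f | G] =ᵐ[lam] 0 := by
  obtain ⟨D₁, -, hpull⟩ := hD_atom.exists_condExp_indicator_ae_eq_s7 hD hf hD₀ hsub
  filter_upwards [hpull, hratio, hc] with s hpull_s hratio_s ⟨hc_zero, hc_one⟩
  rw [hratio_s] at hpull_s
  by_cases hs : s ∈ D₁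
  · rw [Set.indicator_of_mem hs] at hpull_s
    by_contra h_ne
    exact hc_one (smul_left_injective ℝ h_ne (hpull_s.trans (one_smul ℝ _).symm))
  · rw [Set.indicator_of_notMem hs] at hpull_s
    exact (smul_eq_zero.mp hpull_s).resolve_left hc_zero

theorem ae_eq_zero_of_condExp_ae_eq_zero_of_nonneg {f : S → ℝ} (hG : G ≤ mS)
    [SigmaFinite (lam.trim hG)] (hf_nonneg : 0 ≤ᵐ[lam] f) (hf : Integrable f lam)
    (hcond : lam[f | G] =ᵐ[lam] 0) : f =ᵐ[lam] 0 := by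
  rw [← integral_eq_zero_iff_of_nonneg_ae hf_nonneg hf]
  calc
    ∫ s, f s ∂lam = ∫ s, (lam[f | G]) s ∂lam := (integral_condExp hG).symm
    _ = 0 := integral_eq_zero_of_ae hcond

theorem not_exists_half_condexp_indicator_of_gAtom_general
    {c : S → ℝ} (hG : G ≤ mS) [SigmaFinite (lam.trim hG)] (hD : MeasurableSet D)
    (hD_finite : lam D ≠ ⊤) (hD_atom : IsGAtom mS G lam D)
    (hc : ∀ᵐ s ∂lam, c s ≠ 0 ∧ c s ≠ 1) :
    ¬ ∃ D₂ ⊆ D, MeasurableSet D₂ ∧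
      lam[D₂.indicator (fun _ => (1 : ℝ)) | G]
        =ᵐ[lam] fun s => c s * (lam[D.indicator (fun _ => (1 : ℝ)) | G]) s := by
  rintro ⟨D₂, hsub, hD₂, hratio⟩
  have h_one : IntegrableOn (fun _ => (1 : ℝ)) D lam := integrableOn_const hD_finite
  have hcond : lam[D.indicator (fun _ => (1 : ℝ)) | G] =ᵐ[lam] 0 :=
    hD_atom.condExp_indicator_ae_eq_zero_of_ae_eq_smul_s7 hD h_one hD₂ hsub hc hratio
  have h_indicator : D.indicator (fun _ => (1 : ℝ)) =ᵐ[lam] 0 :=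
    ae_eq_zero_of_condExp_ae_eq_zero_of_nonneg hG
      (.of_forall (Set.indicator_nonneg fun _ _ => zero_le_one)) (h_one.integrable_indicator hD)
      hcond
  have hD_null : lam D = 0 := by
    simpa [Function.support_const one_ne_zero] using Set.indicator_ae_eq_zero.mp h_indicator
  exact hD_atom.1.ne' hD_null

end

/-- If `D` is a `G`-atom, then there is no measurable `D₂ ⊆ D` with
`E(1_{D₂}|G) = (1/2)·E(1_D|G)` almost everywhere. -/
theorem not_exists_half_condexp_indicator_of_gAtom
    {S : Type*} [mS : MeasurableSpace S]
    (lam : Measure S) [IsProbabilityMeasure lam]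
    (G : MeasurableSpace S) (hG : G ≤ mS)
    (D : Set S) (hD : MeasurableSet[mS] D)
    (hD_atom : IsGAtom mS G lam D) :
    ¬ ∃ D₂ : Set S, D₂ ⊆ D ∧ MeasurableSet[mS] D₂ ∧
      lam[D₂.indicator (fun _ => (1 : ℝ))|G]
        =ᵐ[lam] fun s => (1 / 2 : ℝ) * (lam[D.indicator (fun _ => (1 : ℝ))|G]) s := by
  exact not_exists_half_condexp_indicator_of_gAtom_general hG hD (measure_ne_top lam D) hD_atom
    (.of_forall fun _ => by norm_num)
end

section
/- Let H and R be standard Borel spaces with Borel sigma-algebras cal-H and cal-R, let kappa be a probability measure on (H, cal-H), and let (nu_h)_{h in H} be a Markov kernel from H to R such that nu_h is an atomless probability measure for kappa-almost every h. Define the probability measure lambda on (H x R, cal-H tensor cal-R) by lambda(Z) = integral over H of nu_h(Z_h) d kappa(h), where Z_h = { r : (h, r) in Z }. Let G = { E x R : E in cal-H }. Then cal-H tensor cal-R has no G-atom under lambda: for every measurable D contained in H x R with lambda(D) > 0 there exists a measurable D_0 contained in D such that for every E in cal-H, lambda(D_0 symmetric-difference ((E x R) intersect D)) > 0. -/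
open MeasureTheory ProbabilityTheory

/-!
For almost every `h` whose fibre `D_h` has positive mass, some measurable set splits `D_h` into two
parts of positive mass. The sets that fail to split `D_h` are closed under complements and countable
unions, so a member of a countable generating family of `R` splits it too. By countability a single
`B` splits `D_h` for a non-null set of `h`. Then `D₀ = (H × B) ∩ D` works: the fibre over `h` of its
symmetric difference with `(E × R) ∩ D` is `D_h \ B` if `h ∈ E` and `D_h ∩ B` otherwise.
-/

section Splitting

variable {α : Type*} [m : MeasurableSpace α] {μ : Measure α}

/-- A measure is atomless if every measurable set of positive measure has a measurable subset of
strictly smaller positive measure. Unlike `NoAtoms`, this does not refer to singletons. -/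
def IsAtomless (μ : Measure α) : Prop :=
  ∀ B : Set α, MeasurableSet B → 0 < μ B → ∃ B' ⊆ B, MeasurableSet B' ∧ 0 < μ B' ∧ μ B' < μ B

/-- The set `B` splits `D` into two parts of positive `μ`-measure; neither set is required to be
measurable. -/
def SplitsMass (μ : Measure α) (B D : Set α) : Prop :=
  0 < μ (D ∩ B) ∧ 0 < μ (D \ B)

lemma SplitsMass.of_compl {B D : Set α} (h : SplitsMass μ Bᶜ D) : SplitsMass μ B D := by
  rw [SplitsMass, Set.sdiff_compl, ← Set.sdiff_eq] at h
  exact h.symm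

lemma SplitsMass.exists_of_iUnion {ι : Type*} [Countable ι] {B : ι → Set α} {D : Set α}
    (h : SplitsMass μ (⋃ i, B i) D) : ∃ i, SplitsMass μ (B i) D := by
  obtain ⟨h_inter, h_diff⟩ := h
  rw [Set.inter_iUnion] at h_inter
  obtain ⟨i, hi⟩ := exists_measure_pos_of_not_measure_iUnion_null h_inter.ne'
  exact ⟨i, hi, h_diff.trans_le (measure_mono (Set.sdiff_subset_sdiff_right
    (Set.subset_iUnion B i)))⟩

lemma SplitsMass.exists_mem_generator {C : Set (Set α)} (hC : m = MeasurableSpace.generateFrom C)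
    {B D : Set α} (hB : MeasurableSet B) (h : SplitsMass μ B D) : ∃ A ∈ C, SplitsMass μ A D := by
  rw [hC] at hB
  induction B, hB using MeasurableSpace.generateFrom_induction with
  | hC A hA _ => exact ⟨A, hA, h⟩
  | empty => simp [SplitsMass] at h
  | compl A _ ih => exact ih h.of_compl
  | iUnion A _ ih =>
    obtain ⟨n, hn⟩ := h.exists_of_iUnion
    exact ih n hn

lemma IsAtomless.exists_splitsMass (hμ : IsAtomless μ) {D : Set α} (hD : MeasurableSet D)
    (hpos : 0 < μ D) : ∃ B, MeasurableSet B ∧ SplitsMass μ B D := by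
  obtain ⟨B, hBD, hB, hB_pos, hB_lt⟩ := hμ D hD hpos
  refine ⟨B, hB, ?_, (tsub_pos_of_lt hB_lt).trans_le le_measure_sdiff⟩
  rwa [Set.inter_eq_right.2 hBD]

end Splitting

section Kernel

variable {H R : Type*} [MeasurableSpace R]

lemma SplitsMass.measure_preimage_symmDiff_pos {μ : Measure R} {B : Set R} {D : Set (H × R)} {h : H}
    (hB : SplitsMass μ B (Prod.mk h ⁻¹' D)) (E : Set H) :
    0 < μ (Prod.mk h ⁻¹' symmDiff ((Set.univ ×ˢ B) ∩ D) ((E ×ˢ Set.univ) ∩ D)) := by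
  obtain ⟨h_inter, h_diff⟩ := hB
  by_cases hE : h ∈ E
  · refine h_diff.trans_le (measure_mono fun r ⟨hrD, hrB⟩ => ?_)
    exact Or.inr ⟨⟨⟨hE, trivial⟩, hrD⟩, fun hr => hrB hr.1.2⟩
  · refine h_inter.trans_le (measure_mono fun r ⟨hrD, hrB⟩ => ?_)
    exact Or.inl ⟨⟨⟨trivial, hrB⟩, hrD⟩, fun hr => hE hr.1.1⟩

variable [MeasurableSpace H] {κ : Measure H}

lemma lintegral_kernel_prodMk_pos_iff {ν : Kernel H R} [IsSFiniteKernel ν] {Z : Set (H × R)}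
    (hZ : MeasurableSet Z) :
    0 < ∫⁻ h, ν h (Prod.mk h ⁻¹' Z) ∂κ ↔ ∃ᵐ h ∂κ, 0 < ν h (Prod.mk h ⁻¹' Z) := by
  simp only [pos_iff_ne_zero, ne_eq, Filter.Frequently, not_not,
    lintegral_eq_zero_iff (Kernel.measurable_kernel_prodMk_left hZ), Filter.EventuallyEq,
    Pi.zero_apply]

lemma exists_measurableSet_frequently_splitsMass [MeasurableSpace.CountablyGenerated R]
    {ν : H → Measure R} (hν : ∀ᵐ h ∂κ, IsAtomless (ν h)) {D : Set (H × R)} (hD : MeasurableSet D)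
    (hpos : ∃ᵐ h ∂κ, 0 < ν h (Prod.mk h ⁻¹' D)) :
    ∃ B, MeasurableSet B ∧ ∃ᵐ h ∂κ, SplitsMass (ν h) B (Prod.mk h ⁻¹' D) := by
  obtain ⟨C, hC_countable, hC⟩ :=
    MeasurableSpace.CountablyGenerated.isCountablyGenerated (α := R)
  have h_split : ∃ᵐ h ∂κ, ∃ B ∈ C, SplitsMass (ν h) B (Prod.mk h ⁻¹' D) := by
    refine (hpos.and_eventually hν).mono fun h ⟨h_pos, h_atomless⟩ => ?_
    obtain ⟨B, hB, hB_split⟩ := h_atomless.exists_splitsMass (measurable_prodMk_left hD) h_pos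
    exact hB_split.exists_mem_generator hC hB
  obtain ⟨B, hBC, hB_split⟩ : ∃ B ∈ C, ∃ᵐ h ∂κ, SplitsMass (ν h) B (Prod.mk h ⁻¹' D) := by
    contrapose! h_split
    simpa only [Filter.not_frequently, not_exists, not_and] using
      (ae_ball_iff hC_countable).2 h_split
  exact ⟨B, hC ▸ MeasurableSpace.measurableSet_generateFrom hBC, hB_split⟩

end Kernel

theorem no_cylinder_atom_of_ae_atomless_kernel_general
    {H R : Type*} [MeasurableSpace H] [MeasurableSpace R] [MeasurableSpace.CountablyGenerated R]
    (κ : Measure H) (ν : Kernel H R) [IsSFiniteKernel ν]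
    (h_atomless : ∀ᵐ h ∂κ, IsAtomless (ν h))
    (lam : Measure (H × R))
    (h_lam : ∀ Z : Set (H × R), MeasurableSet Z → lam Z = ∫⁻ h, ν h (Prod.mk h ⁻¹' Z) ∂κ)
    (D : Set (H × R)) (hD : MeasurableSet D) (hD_pos : 0 < lam D) :
    ∃ D₀ ⊆ D, MeasurableSet D₀ ∧ ∀ E : Set H, MeasurableSet E →
      0 < lam (symmDiff D₀ ((E ×ˢ (Set.univ : Set R)) ∩ D)) := by
  rw [h_lam D hD, lintegral_kernel_prodMk_pos_iff hD] at hD_pos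
  obtain ⟨B, hB, hB_split⟩ := exists_measurableSet_frequently_splitsMass h_atomless hD hD_pos
  have hD₀ : MeasurableSet ((Set.univ ×ˢ B) ∩ D) := (MeasurableSet.univ.prod hB).inter hD
  refine ⟨_, Set.inter_subset_right, hD₀, fun E hE => ?_⟩
  have h_symmDiff := hD₀.symmDiff ((hE.prod MeasurableSet.univ).inter hD)
  rw [h_lam _ h_symmDiff, lintegral_kernel_prodMk_pos_iff h_symmDiff]
  exact hB_split.mono fun h hh => hh.measure_preimage_symmDiff_pos E

/-- **Noisy state spaces have no cylinder atoms**: if `ν` is a Markov kernel from a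
standard Borel space `H` to a standard Borel space `R` which is atomless for
`kappa`-almost every `h`, and `lam` is the induced measure on `H × R`, then the product
σ-algebra has no atom over the sub-σ-algebra of cylinder sets `E × R`. -/
theorem no_cylinder_atom_of_ae_atomless_kernel
    {H R : Type*} [MeasurableSpace H] [StandardBorelSpace H]
    [MeasurableSpace R] [StandardBorelSpace R]
    (kappa : Measure H) [IsProbabilityMeasure kappa]
    (ν : Kernel H R) [IsMarkovKernel ν]
    -- `ν h` is atomless for `kappa`-almost every `h`
    (h_atomless : ∀ᵐ h ∂kappa, ∀ B : Set R, MeasurableSet B → 0 < ν h B →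
      ∃ B' ⊆ B, MeasurableSet B' ∧ 0 < ν h B' ∧ ν h B' < ν h B)
    -- `lam Z = ∫ ν h (Z_h) dkappa(h)`
    (lam : Measure (H × R))
    (h_lam : ∀ Z : Set (H × R), MeasurableSet Z →
      lam Z = ∫⁻ h, ν h (Prod.mk h ⁻¹' Z) ∂kappa) :
    ∀ D : Set (H × R), MeasurableSet D → 0 < lam D →
      ∃ D₀ ⊆ D, MeasurableSet D₀ ∧ ∀ E : Set H, MeasurableSet E →
        0 < lam (symmDiff D₀ ((E ×ˢ (Set.univ : Set R)) ∩ D)) :=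
  no_cylinder_atom_of_ae_atomless_kernel_general kappa ν h_atomless lam h_lam
end

section
/- Let H and R be standard Borel spaces, kappa a probability measure on H, and (nu_h)_{h in H} a Markov kernel from H to R such that nu_h is an atomless probability measure for kappa-almost every h. Then for every measurable D contained in H x R there exists a measurable D_0 contained in D such that nu_h((D_0)_h) = (1/2) nu_h(D_h) for kappa-almost every h, where D_h = { r : (h, r) in D }. -/
open MeasureTheory ProbabilityTheory
open scoped ENNReal

/-!
Order `R` by a measurable injection `f : R → ℝ` and fill each section `D_h` in increasing order of
`f` until half of its mass is exhausted: `D₀` consists of the `(h, r) ∈ D` such that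
`ν_h {r' ∈ D_h | f r' ≤ f r} ≤ ν_h(D_h) / 2`. This is a jointly measurable condition on `(h, r)`.
Its section at `h` has exactly half the mass of `D_h` because, for a finite measure `μ` on `ℝ` whose
points are null, `μ {x | μ (Iic x) ≤ c} = c` whenever `c ≤ μ univ`: by inner regularity the left
side is at most `c`, and by the same argument with `Ici` its complement has mass at most
`μ univ - c`.
-/

open Set

section LinearOrder

variable {α : Type*} [LinearOrder α] [TopologicalSpace α] [MeasurableSpace α] {μ : Measure α}
  {s : Set α} {c : ℝ≥0∞}

lemma measure_le_of_forall_measure_Iic_le [ClosedIciTopology α] [μ.InnerRegular]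
    (hs : MeasurableSet s) (h : ∀ x ∈ s, μ (Iic x) ≤ c) : μ s ≤ c := by
  rw [hs.measure_eq_iSup_isCompact]
  refine iSup₂_le fun K hKs ↦ iSup_le fun hK ↦ ?_
  rcases K.eq_empty_or_nonempty with rfl | hne
  · simp
  · obtain ⟨x, hxK, hx⟩ := hK.exists_isGreatest hne
    exact (measure_mono hx).trans (h x (hKs hxK))

lemma measure_le_of_forall_measure_Ici_le [ClosedIicTopology α] [μ.InnerRegular]
    (hs : MeasurableSet s) (h : ∀ x ∈ s, μ (Ici x) ≤ c) : μ s ≤ c := by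
  rw [hs.measure_eq_iSup_isCompact]
  refine iSup₂_le fun K hKs ↦ iSup_le fun hK ↦ ?_
  rcases K.eq_empty_or_nonempty with rfl | hne
  · simp
  · obtain ⟨x, hxK, hx⟩ := hK.exists_isLeast hne
    exact (measure_mono hx).trans (h x (hKs hxK))

variable [OrderClosedTopology α] [OpensMeasurableSpace α]

lemma measurableSet_setOf_measure_Iic_le (μ : Measure α) (c : ℝ≥0∞) :
    MeasurableSet {x | μ (Iic x) ≤ c} := by
  have h_lower : IsLowerSet {x | μ (Iic x) ≤ c} :=
    fun _ _ hyx hx ↦ (measure_mono (Iic_subset_Iic.2 hyx)).trans hx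
  exact h_lower.ordConnected.measurableSet

lemma measure_setOf_measure_Iic_le [μ.InnerRegular] [IsFiniteMeasure μ] [NullSingletonClass μ]
    (hc : c ≤ μ univ) : μ {x | μ (Iic x) ≤ c} = c := by
  set L := {x | μ (Iic x) ≤ c}
  have hL : MeasurableSet L := measurableSet_setOf_measure_Iic_le μ c
  have h_compl : μ Lᶜ ≤ μ univ - c := by
    refine measure_le_of_forall_measure_Ici_le hL.compl fun x hx ↦ ?_
    have hcx : c < μ (Iic x) := not_le.1 hx
    calc μ (Ici x) = μ (Iic x)ᶜ := by rw [compl_Iic, measure_congr Ioi_ae_eq_Ici]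
      _ = μ univ - μ (Iic x) := measure_compl measurableSet_Iic (measure_ne_top μ _)
      _ ≤ μ univ - c := tsub_le_tsub_left hcx.le _
  refine le_antisymm (measure_le_of_forall_measure_Iic_le hL fun x hx ↦ hx) ?_
  refine ENNReal.le_of_add_le_add_right (a := μ univ - c) (by finiteness) ?_
  calc c + (μ univ - c) = μ L + μ Lᶜ := by
        rw [add_tsub_cancel_of_le hc, measure_add_measure_compl hL]
    _ ≤ μ L + (μ univ - c) := by gcongr

end LinearOrder

lemma nullSingletonClass_map_of_injective {α β : Type*} [MeasurableSpace α] [MeasurableSpace β]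
    [MeasurableSingletonClass β] {μ : Measure α} [NullSingletonClass μ] {f : α → β}
    (hf : Measurable f) (hf_inj : Function.Injective f) : NullSingletonClass (μ.map f) where
  measure_singleton x := by
    rw [Measure.map_apply hf (measurableSet_singleton x)]
    exact (subsingleton_singleton.preimage hf_inj).measure_zero μ

lemma nullSingletonClass_of_forall_exists_subset_measure_lt {α : Type*} [MeasurableSpace α]
    [MeasurableSingletonClass α] {μ : Measure α}
    (h : ∀ B, MeasurableSet B → 0 < μ B → ∃ B' ⊆ B, MeasurableSet B' ∧ 0 < μ B' ∧ μ B' < μ B) :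
    NullSingletonClass μ where
  measure_singleton x := by
    by_contra hx
    obtain ⟨B', hB', -, h_pos, h_lt⟩ := h {x} (measurableSet_singleton x) (pos_iff_ne_zero.2 hx)
    rcases subset_singleton_iff_eq.1 hB' with rfl | rfl
    · simp at h_pos
    · exact h_lt.false

lemma exists_measurable_injective_real (α : Type*) [MeasurableSpace α]
    [MeasurableSpace.CountablySeparated α] : ∃ f : α → ℝ, Measurable f ∧ Function.Injective f := by
  obtain ⟨g, hg, hg_inj⟩ := MeasurableSpace.measurable_injection_nat_bool_of_countablySeparated α
  have h_emb := measurableEmbedding_embeddingReal (ℕ → Bool)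
  exact ⟨_, h_emb.measurable.comp hg, h_emb.injective.comp hg_inj⟩

section Kernel

variable {H R α : Type*} [MeasurableSpace H] [MeasurableSpace R] {ν : Kernel H R} {f : R → α}
  {D : Set (H × R)} {t : ℝ≥0∞}

/-- The portion of `D ⊆ H × R` obtained by filling each section `D_h` in increasing order of `f`
until the fraction `t` of its `ν h`-mass is exhausted: a point `r` of `D_h` is kept when the initial
segment `{r' ∈ D_h | f r' ≤ f r}` has mass at most `t * ν h D_h`. -/
def initialPortion [Preorder α] (ν : Kernel H R) (f : R → α) (D : Set (H × R)) (t : ℝ≥0∞) :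
    Set (H × R) :=
  {p ∈ D | ν p.1 (Prod.mk p.1 ⁻¹' D ∩ f ⁻¹' Iic (f p.2)) ≤ t * ν p.1 (Prod.mk p.1 ⁻¹' D)}

lemma initialPortion_subset [Preorder α] : initialPortion ν f D t ⊆ D :=
  sep_subset _ _

variable [TopologicalSpace α] [MeasurableSpace α]

lemma measurableSet_initialPortion [PartialOrder α] [OrderClosedTopology α]
    [SecondCountableTopology α] [OpensMeasurableSpace α] [IsSFiniteKernel ν] (hf : Measurable f)
    (hD : MeasurableSet D) : MeasurableSet (initialPortion ν f D t) := by
  have h_segment : MeasurableSet {q : (H × R) × R | (q.1.1, q.2) ∈ D ∧ f q.2 ≤ f q.1.2} :=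
    (hD.preimage (by fun_prop)).inter (measurableSet_le (by fun_prop) (by fun_prop))
  have h_mass_segment :
      Measurable fun p : H × R ↦ ν p.1 (Prod.mk p.1 ⁻¹' D ∩ f ⁻¹' Iic (f p.2)) :=
    Kernel.measurable_kernel_prodMk_left (κ := ν.prodMkRight R) h_segment
  have h_mass_section : Measurable fun p : H × R ↦ ν p.1 (Prod.mk p.1 ⁻¹' D) :=
    (Kernel.measurable_kernel_prodMk_left hD).comp measurable_fst
  exact hD.inter (measurableSet_le h_mass_segment (h_mass_section.const_mul t))

lemma measure_section_initialPortion [LinearOrder α] [OrderClosedTopology α] [PolishSpace α]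
    [BorelSpace α] (hf : Measurable f) (hf_inj : Function.Injective f) (ht : t ≤ 1) {h : H}
    [NullSingletonClass (ν h)] (h_fin : ν h (Prod.mk h ⁻¹' D) ≠ ∞) :
    ν h (Prod.mk h ⁻¹' initialPortion ν f D t) = t * ν h (Prod.mk h ⁻¹' D) := by
  set S := Prod.mk h ⁻¹' D
  have : IsFiniteMeasure ((ν h).restrict S) := isFiniteMeasure_restrict.2 h_fin
  set μ := ((ν h).restrict S).map f
  have : NullSingletonClass μ := nullSingletonClass_map_of_injective hf hf_inj
  have hμ {s : Set α} (hs : MeasurableSet s) : μ s = ν h (S ∩ f ⁻¹' s) := by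
    rw [Measure.map_apply hf hs, Measure.restrict_apply (hf hs), inter_comm]
  have h_le : t * ν h S ≤ μ univ := by
    simpa [hμ MeasurableSet.univ] using mul_le_of_le_one_left' ht
  calc ν h (Prod.mk h ⁻¹' initialPortion ν f D t)
      = ν h (S ∩ f ⁻¹' {x | μ (Iic x) ≤ t * ν h S}) := by
        simp only [hμ measurableSet_Iic]
        rfl
    _ = μ {x | μ (Iic x) ≤ t * ν h S} := (hμ (measurableSet_setOf_measure_Iic_le μ _)).symm
    _ = t * ν h S := measure_setOf_measure_Iic_le h_le

end Kernel

theorem exists_measurable_subset_halving_sections_general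
    {H R : Type*} [MeasurableSpace H] [MeasurableSpace R] [MeasurableSpace.CountablySeparated R]
    (ν : Kernel H R) [IsSFiniteKernel ν] {t : ℝ≥0∞} (ht : t ≤ 1)
    {D : Set (H × R)} (hD : MeasurableSet D) :
    ∃ D₀ ⊆ D, MeasurableSet D₀ ∧
      ∀ h, NullSingletonClass (ν h) → ν h (Prod.mk h ⁻¹' D) ≠ ∞ →
        ν h (Prod.mk h ⁻¹' D₀) = t * ν h (Prod.mk h ⁻¹' D) := by
  obtain ⟨f, hf, hf_inj⟩ := exists_measurable_injective_real R
  exact ⟨initialPortion ν f D t, initialPortion_subset, measurableSet_initialPortion hf hD,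
    fun _ _ h_fin ↦ measure_section_initialPortion hf hf_inj ht h_fin⟩

/-- If `ν` is a Markov kernel from a standard Borel space `H` to a standard Borel space
`R` which is atomless for `kappa`-almost every `h`, then every measurable `D ⊆ H × R` has
a measurable subset `D₀` whose sections halve the measure of the sections of `D`,
`kappa`-almost everywhere. -/
theorem exists_measurable_subset_halving_sections
    {H R : Type*} [MeasurableSpace H] [StandardBorelSpace H]
    [MeasurableSpace R] [StandardBorelSpace R]
    (kappa : Measure H) [IsProbabilityMeasure kappa]
    (ν : Kernel H R) [IsMarkovKernel ν]
    (h_atomless : ∀ᵐ h ∂kappa, ∀ B : Set R, MeasurableSet B → 0 < ν h B →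
      ∃ B' ⊆ B, MeasurableSet B' ∧ 0 < ν h B' ∧ ν h B' < ν h B) :
    ∀ D : Set (H × R), MeasurableSet D →
      ∃ D₀ ⊆ D, MeasurableSet D₀ ∧
        ∀ᵐ h ∂kappa, ν h (Prod.mk h ⁻¹' D₀) = (1 / 2 : ℝ≥0∞) * ν h (Prod.mk h ⁻¹' D) := by
  intro D hD
  obtain ⟨D₀, hD₀, hD₀_meas, h_half⟩ :=
    exists_measurable_subset_halving_sections_general ν (t := 1 / 2) (by simp) hD
  refine ⟨D₀, hD₀, hD₀_meas, h_atomless.mono fun h hh ↦ h_half h ?_ (measure_ne_top _ _)⟩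
  exact nullSingletonClass_of_forall_exists_subset_measure_lt hh
end

section
/- Let (S, Sigma, lambda) be a probability space, let ([0,1], B, eta) be the unit interval with its Borel sigma-algebra and Lebesgue measure, and let lambda' = lambda tensor eta be the product probability measure on (S x [0,1], Sigma tensor B). Let G' = { E x [0,1] : E in Sigma }. Then Sigma tensor B has no G'-atom under lambda': for every measurable D contained in S x [0,1] with lambda'(D) > 0 there exists a measurable D_0 contained in D such that for every E in Sigma, lambda'(D_0 symmetric-difference ((E x [0,1]) intersect D)) > 0. -/
open MeasureTheory

/-!
A cylinder `E × T` meets each vertical section of `D` in all or nothing. If every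
`D ∩ (S × A)`, for `A` in a countable family separating the points of `T`, agreed with a cylinder
inside `D` up to a null set, then almost every section of `D` would be almost contained in `A` or
in `Aᶜ` for all those `A` at once, hence concentrated on a single point, hence null.
-/

section

variable {S T : Type*} [MeasurableSpace S] [MeasurableSpace T] {μ : Measure S} {ν : Measure T}

lemma measure_eq_zero_of_forall_mem_ae_or_compl_mem_ae (p : Set T → Prop)
    [HasCountableSeparatingOn T p Set.univ] [NullSingletonClass ν]
    (h : ∀ A, p A → A ∈ ae ν ∨ Aᶜ ∈ ae ν) : ν = 0 := by
  obtain ⟨t, -, ht_subsingleton, ht_ae⟩ :=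
    Filter.exists_subset_subsingleton_mem_of_forall_separating p Filter.univ_mem h
  have ht_null : tᶜ ∈ ae ν := compl_mem_ae_iff.2 (ht_subsingleton.measure_zero ν)
  rw [← ae_eq_bot, ← Filter.empty_mem_iff_bot, ← Set.inter_compl_self t]
  exact Filter.inter_mem ht_ae ht_null

lemma ae_section_mem_ae_restrict_or_compl_mem_ae_restrict [SFinite ν] {D : Set (S × T)}
    (hD : MeasurableSet D) {A : Set T} {E : Set S}
    (hE : μ.prod ν (symmDiff (D ∩ Prod.snd ⁻¹' A) (E ×ˢ Set.univ ∩ D)) = 0) :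
    ∀ᵐ s ∂μ, A ∈ ae (ν.restrict (Prod.mk s ⁻¹' D)) ∨ Aᶜ ∈ ae (ν.restrict (Prod.mk s ⁻¹' D)) := by
  have h_iff : ∀ᵐ z ∂μ.prod ν, z ∈ D → (z.2 ∈ A ↔ z.1 ∈ E) := by
    filter_upwards [measure_eq_zero_iff_ae_notMem.1 hE] with z hz hzD
    simpa [Set.mem_symmDiff, hzD, not_or, iff_iff_implies_and_implies] using hz
  filter_upwards [Measure.ae_ae_of_ae_prod h_iff] with s hs
  have hs_restrict : ∀ᵐ y ∂ν.restrict (Prod.mk s ⁻¹' D), y ∈ A ↔ s ∈ E :=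
    (ae_restrict_iff' (measurable_prodMk_left hD)).2 hs
  by_cases hsE : s ∈ E
  · exact .inl (hs_restrict.mono fun y hy ↦ hy.2 hsE)
  · exact .inr (hs_restrict.mono fun y hy hyA ↦ hsE (hy.1 hyA))

lemma measure_prod_eq_zero_of_forall_exists_cylinder (p : Set T → Prop)
    [HasCountableSeparatingOn T p Set.univ] [SFinite ν] [NullSingletonClass ν]
    {D : Set (S × T)} (hD : MeasurableSet D)
    (h : ∀ A, p A → ∃ E : Set S,
      μ.prod ν (symmDiff (D ∩ Prod.snd ⁻¹' A) (E ×ˢ Set.univ ∩ D)) = 0) :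
    μ.prod ν D = 0 := by
  obtain ⟨𝒜, h𝒜_countable, h𝒜_p, h𝒜_sep⟩ :=
    HasCountableSeparatingOn.exists_countable_separating (α := T) (p := p) (t := Set.univ)
  have h𝒜 : HasCountableSeparatingOn T (· ∈ 𝒜) Set.univ :=
    ⟨𝒜, h𝒜_countable, fun _ hA ↦ hA, h𝒜_sep⟩
  have h_sections : ∀ᵐ s ∂μ, ∀ A ∈ 𝒜,
      A ∈ ae (ν.restrict (Prod.mk s ⁻¹' D)) ∨ Aᶜ ∈ ae (ν.restrict (Prod.mk s ⁻¹' D)) := by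
    refine (ae_ball_iff h𝒜_countable).2 fun A hA ↦ ?_
    obtain ⟨E, hE⟩ := h A (h𝒜_p A hA)
    exact ae_section_mem_ae_restrict_or_compl_mem_ae_restrict hD hE
  rw [Measure.measure_prod_null hD]
  filter_upwards [h_sections] with s hs
  exact Measure.restrict_eq_zero.1 (measure_eq_zero_of_forall_mem_ae_or_compl_mem_ae (· ∈ 𝒜) hs)

theorem no_cylinder_atom_of_prod_lebesgue_general [MeasurableSpace.CountablySeparated T]
    [SFinite ν] [NullSingletonClass ν] {D : Set (S × T)} (hD : MeasurableSet D)
    (hD_pos : 0 < μ.prod ν D) :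
    ∃ D₀ ⊆ D, MeasurableSet D₀ ∧ ∀ E : Set S,
      0 < μ.prod ν (symmDiff D₀ (E ×ˢ Set.univ ∩ D)) := by
  by_contra! h_atom
  refine hD_pos.ne' (measure_prod_eq_zero_of_forall_exists_cylinder MeasurableSet hD fun A hA ↦ ?_)
  obtain ⟨E, hE⟩ := h_atom (D ∩ Prod.snd ⁻¹' A) Set.inter_subset_left
    (hD.inter (measurable_snd hA))
  exact ⟨E, nonpos_iff_eq_zero.1 hE⟩

end

/-- **Sunspot extension has no cylinder atoms**: for a probability space `(S, Σ, lam)`,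
the product of `lam` with Lebesgue measure on the unit interval has no atom over the
sub-σ-algebra `G' = {E × [0,1] : E ∈ Σ}` of cylinder sets. -/
theorem no_cylinder_atom_of_prod_lebesgue
    {S : Type*} [mS : MeasurableSpace S]
    (lam : Measure S) [IsProbabilityMeasure lam]
    (lam' : Measure (S × unitInterval))
    (h_lam' : lam' = lam.prod (volume : Measure unitInterval)) :
    ∀ D : Set (S × unitInterval), MeasurableSet D → 0 < lam' D →
      ∃ D₀ ⊆ D, MeasurableSet D₀ ∧ ∀ E : Set S, MeasurableSet E →
        0 < lam' (symmDiff D₀ ((E ×ˢ (Set.univ : Set unitInterval)) ∩ D)) := by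
  subst h_lam'
  intro D hD hD_pos
  obtain ⟨D₀, hD₀_sub, hD₀_meas, hD₀⟩ := no_cylinder_atom_of_prod_lebesgue_general hD hD_pos
  exact ⟨D₀, hD₀_sub, hD₀_meas, fun E _ ↦ hD₀ E⟩
end
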